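/- For any normal double σ-system (Δ,σ₁,σ₂), there exists a normal double σ-system (Δ,σ₁,σ₂′) with (Δ,σ₁,σ₂′) ∼ (Δ,σ₁,σ₂) such that (Δ,σ₁,σ₂′) is canonical. -/

import Mathlib

/-!
A vector `x` that is orthogonal to no root splits `Δ` into the roots with `⟪x, α⟫ > 0` and their
negatives, and the indecomposable roots of the positive half form a fundamental system whose
positive roots are exactly that half (`isFundamentalSystem_simpleRoots`, `posRoots_simpleRoots`).
Everything is therefore phrased in terms of such regular vectors.

For an involution `σ`, a fundamental system is a `σ`-fundamental system when its regular vector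
`x` satisfies `⟪x, α⟫ > 0 → ⟪x, σ α⟫ > 0` for the roots with `σ α ≠ -α`. Such an `x` exists
(`exists_sigma_regular`): take `z` generic and let `x = z + N (z + σ z)` with `N` large. The
dominant term `z + σ z` is `σ`-invariant and is orthogonal to a root `α` only if `σ α = -α`.

Let `x₁`, `x₂` be such vectors for `σ₁`, `σ₂`. The Weyl group is finite, so some `w` maximizes
`⟪x₁, w x₂⟫`; comparing with `s_α w` for every reflection `s_α` shows that `x₁` and `w x₂` have
the same positive roots (`exists_weyl_same_sign`). Hence the fundamental system of `x₁` serves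
both `σ₁` and `σ₂' = w σ₂ w⁻¹`, and `σ₂'` is conjugate to `σ₂` under the Weyl group.
-/

noncomputable section

section SigmaSystems

variable {V : Type*} [AddCommGroup V] [Module ℝ V]
variable {V' : Type*} [AddCommGroup V'] [Module ℝ V']

/-- `Δ` is a reduced root system of `V` with respect to the inner product `b`. -/
def IsReducedRootSystem (b : V → V → ℝ) (Δ : Set V) : Prop :=
  Δ.Finite ∧ (0 : V) ∉ Δ ∧ Submodule.span ℝ Δ = ⊤ ∧
  (∀ α ∈ Δ, ∀ β ∈ Δ,
    β - (2 * b α β / b α α) • α ∈ Δ ∧ ∃ n : ℤ, 2 * b α β / b α α = (n : ℝ)) ∧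
  (∀ α ∈ Δ, ∀ β ∈ Δ, ∀ m : ℝ, β = m • α → m = 1 ∨ m = -1)

/-- the Weyl group of `Δ`: the group generated by the reflections `w_α`, `α ∈ Δ` -/
def WeylGroup (b : V → V → ℝ) (Δ : Set V) : Subgroup (V ≃ₗ[ℝ] V) :=
  Subgroup.closure
    {w : V ≃ₗ[ℝ] V | ∃ α ∈ Δ, ∀ x, w x = x - (2 * b α x / b α α) • α}

/-- `(Δ,σ)` is a `σ`-system: `σ` is an involutive linear isometry preserving `Δ`. -/
def IsSigmaSystem (b : V → V → ℝ) (Δ : Set V) (σ : V →ₗ[ℝ] V) : Prop :=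
  (∀ x, σ (σ x) = x) ∧ (∀ x y, b (σ x) (σ y) = b x y) ∧ σ '' Δ = Δ

/-- normality of a `σ`-system: `σ(α) - α ∉ Δ` for all `α ∈ Δ` -/
def IsNormalSigma (Δ : Set V) (σ : V →ₗ[ℝ] V) : Prop :=
  ∀ α ∈ Δ, σ α - α ∉ Δ

/-- the set of positive roots determined by a fundamental system `Φ`:
nonnegative integer combinations of elements of `Φ` lying in `Δ` -/
def posRoots (Δ Φ : Set V) : Set V :=
  {α | α ∈ Δ ∧ ∃ c : V →₀ ℤ, (↑c.support : Set V) ⊆ Φ ∧ (∀ β, 0 ≤ c β) ∧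
    α = c.sum fun β n => (n : ℝ) • β}

/-- `Φ` is a fundamental system (simple system) of the root system `Δ` -/
def IsFundamentalSystem (Δ Φ : Set V) : Prop :=
  Φ ⊆ Δ ∧ LinearIndependent ℝ (fun x : Φ => (x : V)) ∧
  ∀ α ∈ Δ, α ∈ posRoots Δ Φ ∨ -α ∈ posRoots Δ Φ

/-- `Φ` is a `σ`-fundamental system: a fundamental system with
`σ(α) ∈ Δ⁺` for every `α ∈ Δ⁺` with `σ(α) ≠ -α` -/
def IsSigmaFundamental (Δ Φ : Set V) (σ : V →ₗ[ℝ] V) : Prop :=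
  IsFundamentalSystem Δ Φ ∧
  ∀ α ∈ posRoots Δ Φ, σ α ≠ -α → σ α ∈ posRoots Δ Φ

/-- a double `σ`-system `(Δ,σ₁,σ₂)` is canonical if it admits a
simultaneous `(σ₁,σ₂)`-fundamental system -/
def IsCanonicalDoubleSigma (Δ : Set V) (σ₁ σ₂ : V →ₗ[ℝ] V) : Prop :=
  ∃ Φ : Set V, IsSigmaFundamental Δ Φ σ₁ ∧ IsSigmaFundamental Δ Φ σ₂

/-- isomorphism of double `σ`-systems: a root-system isomorphism `φ : V → V'` and a Weyl
group element `w ∈ W(Δ')` with `σ₁' = φσ₁φ⁻¹` and `σ₂' = wφσ₂φ⁻¹w⁻¹` -/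
def DoubleSigmaIso (b' : V' → V' → ℝ)
    (Δ : Set V) (σ₁ σ₂ : V →ₗ[ℝ] V)
    (Δ' : Set V') (σ₁' σ₂' : V' →ₗ[ℝ] V') : Prop :=
  ∃ φ : V ≃ₗ[ℝ] V', φ '' Δ = Δ' ∧
    σ₁' = φ.toLinearMap ∘ₗ σ₁ ∘ₗ φ.symm.toLinearMap ∧
    ∃ w ∈ WeylGroup b' Δ',
      σ₂' = w.toLinearMap ∘ₗ φ.toLinearMap ∘ₗ σ₂ ∘ₗ φ.symm.toLinearMap ∘ₗ
        w.symm.toLinearMap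

/-- the `(+1)`-eigenspace `V^σ` of an involution `σ` -/
def fixedSpace (σ : V →ₗ[ℝ] V) : Submodule ℝ V :=
  LinearMap.ker (σ - LinearMap.id)

end SigmaSystems

open scoped RealInnerProductSpace

section Helpers

variable {V : Type*} [NormedAddCommGroup V] [InnerProductSpace ℝ V]
variable {Δ : Set V}

lemma root_neg_mem (hΔ : IsReducedRootSystem (fun x y : V => ⟪x, y⟫) Δ) {α : V} (hα : α ∈ Δ) :
    -α ∈ Δ := by
  have h0 : α ≠ 0 := fun h => hΔ.2.1 (h ▸ hα)
  have h := (hΔ.2.2.2.1 α hα α hα).1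
  have h1 : (2 * ⟪α, α⟫ / ⟪α, α⟫ : ℝ) = 2 := by
    field_simp [inner_self_ne_zero (𝕜 := ℝ) |>.2 h0]
  simp only [h1] at h
  rwa [show α - (2 : ℝ) • α = -α by module] at h

/-- If neither Cartan integer of an acute pair of roots equals `1`, both are at least `2`, and then
`‖α - β‖² ≤ 0`. -/
lemma root_sub_mem (hΔ : IsReducedRootSystem (fun x y : V => ⟪x, y⟫) Δ) {α β : V}
    (hα : α ∈ Δ) (hβ : β ∈ Δ) (hne : α ≠ β) (hpos : 0 < ⟪α, β⟫) : α - β ∈ Δ := by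
  have hα0 : α ≠ 0 := fun h => hΔ.2.1 (h ▸ hα)
  have hβ0 : β ≠ 0 := fun h => hΔ.2.1 (h ▸ hβ)
  have haa : 0 < ⟪α, α⟫ := real_inner_self_pos.2 hα0
  have hbb : 0 < ⟪β, β⟫ := real_inner_self_pos.2 hβ0
  obtain ⟨h1, n, hn⟩ := hΔ.2.2.2.1 α hα β hβ
  obtain ⟨h2, m, hm⟩ := hΔ.2.2.2.1 β hβ α hα
  simp only at h1 h2 hn hm
  rw [hn] at h1
  rw [hm] at h2
  rw [real_inner_comm] at hm
  have hn0 : 0 < n := by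
    have : (0 : ℝ) < n := by rw [← hn]; positivity
    exact_mod_cast this
  have hm0 : 0 < m := by
    have : (0 : ℝ) < m := by rw [← hm]; positivity
    exact_mod_cast this
  by_cases hn1 : n = 1
  · have := root_neg_mem hΔ h1
    simpa [hn1] using this
  by_cases hm1 : m = 1
  · simpa [hm1] using h2
  exfalso
  have hn2 : (2 : ℝ) ≤ n := by exact_mod_cast (by omega : (2 : ℤ) ≤ n)
  have hm2 : (2 : ℝ) ≤ m := by exact_mod_cast (by omega : (2 : ℤ) ≤ m)
  rw [← hn, le_div_iff₀ haa] at hn2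
  rw [← hm, le_div_iff₀ hbb] at hm2
  have h3 : 0 < ⟪α - β, α - β⟫ := real_inner_self_pos.2 (sub_ne_zero.2 hne)
  rw [real_inner_sub_sub_self] at h3
  linarith

/-- The indecomposable elements of the half `{α ∈ Δ | 0 < ⟪x, α⟫}` of the root system. -/
def simpleRoots (Δ : Set V) (x : V) : Set V :=
  Subtype.val '' IsAddIndecomposable.baseOf (Subtype.val : Δ → V) (innerₗ V x : V →+ ℝ)

lemma mem_simpleRoots {x α : V} (h : α ∈ simpleRoots Δ x) :
    α ∈ Δ ∧ 0 < ⟪x, α⟫ ∧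
      ∀ β ∈ Δ, ∀ γ ∈ Δ, 0 < ⟪x, β⟫ → 0 < ⟪x, γ⟫ → α = β + γ → β = 0 ∨ γ = 0 := by
  obtain ⟨⟨a, ha⟩, hb, rfl⟩ := h
  refine ⟨ha, by simpa using hb.1, fun β hβ γ hγ h1 h2 h3 => ?_⟩
  exact hb.2 ⟨β, hβ⟩ (by simpa using h1) ⟨γ, hγ⟩ (by simpa using h2) h3

lemma posRoots_simpleRoots (hΔ : IsReducedRootSystem (fun x y : V => ⟪x, y⟫) Δ) (x : V) :
    posRoots Δ (simpleRoots Δ x) = {α | α ∈ Δ ∧ 0 < ⟪x, α⟫} := by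
  classical
  have : Finite Δ := hΔ.1
  ext α
  constructor
  · rintro ⟨hα, c, hc, hc0, rfl⟩
    refine ⟨hα, ?_⟩
    have hne : c ≠ 0 := by
      rintro rfl
      exact hΔ.2.1 (by simpa using hα)
    rw [Finsupp.sum, inner_sum]
    refine Finset.sum_pos (fun β hβ => ?_) (Finsupp.support_nonempty_iff.2 hne)
    rw [inner_smul_right]
    have h1 : 0 < c β := lt_of_le_of_ne (hc0 β) (Ne.symm (Finsupp.mem_support_iff.1 hβ))
    exact mul_pos (by exact_mod_cast h1) (mem_simpleRoots (hc hβ)).2.1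
  · rintro ⟨hα, hpos⟩
    refine ⟨hα, ?_⟩
    have hmem : α ∈ AddSubmonoid.closure (simpleRoots Δ x) := by
      rw [simpleRoots, AddSubmonoid.closure_image_isAddIndecomposable_baseOf]
      exact AddSubmonoid.subset_closure ⟨⟨α, hα⟩, by simpa using hpos, rfl⟩
    clear hα hpos
    induction hmem using AddSubmonoid.closure_induction with
    | mem y hy =>
      refine ⟨Finsupp.single y 1, ?_, fun β => ?_, by simp⟩
      · intro z hz
        have : z = y := by simpa [Finsupp.single_apply, eq_comm] using hz
        exact this ▸ hy
      · rw [Finsupp.single_apply]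
        split_ifs <;> simp
    | zero => exact ⟨0, by simp, by simp, by simp⟩
    | add y z _ _ hy hz =>
      obtain ⟨c, h1, h2, h3⟩ := hy
      obtain ⟨d, h4, h5, h6⟩ := hz
      refine ⟨c + d, fun v hv => ?_, fun β => add_nonneg (h2 β) (h5 β), ?_⟩
      · rcases Finset.mem_union.1 (Finsupp.support_add hv) with h | h
        exacts [h1 h, h4 h]
      · rw [Finsupp.sum_add_index' (by simp) (by intros; push_cast; rw [add_smul]), ← h3, ← h6]

lemma isFundamentalSystem_simpleRoots (hΔ : IsReducedRootSystem (fun x y : V => ⟪x, y⟫) Δ)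
    {x : V} (hx : ∀ α ∈ Δ, ⟪x, α⟫ ≠ 0) : IsFundamentalSystem Δ (simpleRoots Δ x) := by
  refine ⟨fun α h => (mem_simpleRoots h).1, ?_, fun α hα => ?_⟩
  · refine LinearMap.BilinForm.linearIndependent_of_pairwise_le_zero (innerₗ V) ?_ (innerₗ V x)
      _ (fun i => (mem_simpleRoots i.2).2.1) ?_
    · intro v hv
      exact real_inner_self_pos.2 hv
    · rintro ⟨a, ha⟩ ⟨b, hb⟩ hne
      obtain ⟨ha1, ha2, ha3⟩ := mem_simpleRoots ha
      obtain ⟨hb1, hb2, hb3⟩ := mem_simpleRoots hb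
      have hne' : a ≠ b := fun h => hne (Subtype.ext h)
      by_contra hcon
      have hab : 0 < ⟪a, b⟫ := by simpa using hcon
      have hs := root_sub_mem hΔ ha1 hb1 hne' hab
      have hs' := root_neg_mem hΔ hs
      rw [neg_sub] at hs'
      have ha0 : a ≠ 0 := fun h => hΔ.2.1 (h ▸ ha1)
      have hb0 : b ≠ 0 := fun h => hΔ.2.1 (h ▸ hb1)
      -- whichever of `±(a - b)` is positive decomposes one of the two simple roots
      rcases lt_or_gt_of_ne (hx _ hs) with h | h
      · have h' : 0 < ⟪x, b - a⟫ := by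
          rw [inner_sub_right] at h ⊢
          linarith
        rcases hb3 _ hs' a ha1 h' ha2 (by simp) with h0 | h0
        · exact hne' (sub_eq_zero.1 h0).symm
        · exact ha0 h0
      · rcases ha3 _ hs b hb1 h hb2 (by simp) with h0 | h0
        · exact hne' (sub_eq_zero.1 h0)
        · exact hb0 h0
  · rw [posRoots_simpleRoots hΔ]
    rcases lt_or_gt_of_ne (hx _ hα) with h | h
    · exact Or.inr ⟨root_neg_mem hΔ hα, by rw [inner_neg_right]; linarith⟩
    · exact Or.inl ⟨hα, h⟩

lemma exists_sigma_regular [FiniteDimensional ℝ V]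
    (hΔ : IsReducedRootSystem (fun x y : V => ⟪x, y⟫) Δ) {σ : V →ₗ[ℝ] V}
    (hσ : IsSigmaSystem (fun x y : V => ⟪x, y⟫) Δ σ) :
    ∃ x : V, (∀ α ∈ Δ, ⟪x, α⟫ ≠ 0) ∧
      ∀ α ∈ Δ, σ α ≠ -α → 0 < ⟪x, α⟫ → 0 < ⟪x, σ α⟫ := by
  obtain ⟨hinv, hiso, himg⟩ := hσ
  have hfin : (Δ ∪ ((fun α => α + σ α) '' Δ) \ {0}).Finite :=
    hΔ.1.union ((hΔ.1.image _).subset Set.sdiff_subset)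
  have : Finite ↥(Δ ∪ ((fun α => α + σ α) '' Δ) \ {0}) := hfin
  obtain ⟨f, hf⟩ := Module.exists_dual_forall_apply_ne_zero (K := ℝ)
    (Subtype.val : ↥(Δ ∪ ((fun α => α + σ α) '' Δ) \ {0}) → V) (by
      rintro ⟨v, hv | hv⟩ h
      · exact hΔ.2.1 (by simpa using h ▸ hv)
      · exact hv.2 h)
  obtain ⟨z, hz⟩ : ∃ z : V, ∀ v, ⟪z, v⟫ = f v :=
    ⟨(InnerProductSpace.toDual ℝ V).symm (LinearMap.toContinuousLinearMap f), fun v => by simp⟩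
  have hz1 : ∀ α ∈ Δ, ⟪z, α⟫ ≠ 0 := fun α hα => by
    rw [hz]
    exact hf ⟨α, Or.inl hα⟩
  have hadj : ∀ α, ⟪σ z, α⟫ = ⟪z, σ α⟫ := fun α => by
    have := hiso z (σ α)
    simp only [hinv] at this
    exact this
  have hy : ∀ α, ⟪z + σ z, α⟫ = ⟪z, α + σ α⟫ := fun α => by
    rw [inner_add_left, inner_add_right, hadj]
  have hy1 : ∀ α ∈ Δ, σ α ≠ -α → ⟪z + σ z, α⟫ ≠ 0 := fun α hα hne => by
    rw [hy, hz]
    exact hf ⟨α + σ α, Or.inr ⟨⟨α, hα, rfl⟩, fun h => hne (eq_neg_of_add_eq_zero_right h)⟩⟩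
  have hy2 : ∀ α, σ α = -α → ⟪z + σ z, α⟫ = 0 := fun α h => by
    rw [hy, h]
    simp
  have hyσ : ∀ α, ⟪z + σ z, σ α⟫ = ⟪z + σ z, α⟫ := fun α => by
    rw [hy, hy, hinv, add_comm]
  -- for large `N`, the sign of `⟪z + N • (z + σ z), α⟫` is that of `⟪z + σ z, α⟫`
  have hN : ∀ᶠ N : ℝ in Filter.atTop, ∀ α ∈ Δ,
      0 < ⟪z + σ z, α⟫ → 0 < ⟪z, α⟫ + N * ⟪z + σ z, α⟫ := by
    rw [Filter.eventually_all_finite hΔ.1]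
    intro α hα
    by_cases h : 0 < ⟪z + σ z, α⟫
    · have ht : Filter.Tendsto (fun N : ℝ => ⟪z, α⟫ + N * ⟪z + σ z, α⟫) Filter.atTop Filter.atTop :=
        Filter.tendsto_atTop_add_const_left _ _ (Filter.tendsto_id.atTop_mul_const h)
      filter_upwards [ht.eventually_gt_atTop 0] with N h1 _ using h1
    · exact Filter.Eventually.of_forall fun N h' => absurd h' h
  obtain ⟨N, hN⟩ := hN.exists
  have hxe : ∀ α, ⟪z + N • (z + σ z), α⟫ = ⟪z, α⟫ + N * ⟪z + σ z, α⟫ := fun α => by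
    rw [inner_add_left z, real_inner_smul_left]
  have hN' : ∀ α ∈ Δ, ⟪z + σ z, α⟫ < 0 → ⟪z, α⟫ + N * ⟪z + σ z, α⟫ < 0 := fun α hα h => by
    have := hN (-α) (root_neg_mem hΔ hα)
    simp only [inner_neg_right] at this
    linarith [this (by linarith)]
  refine ⟨z + N • (z + σ z), fun α hα => ?_, fun α hα hne hpos => ?_⟩
  · rw [hxe]
    by_cases h : σ α = -α
    · rw [hy2 α h]
      simpa using hz1 α hα
    · rcases lt_or_gt_of_ne (hy1 α hα h) with h | h
      · exact (hN' α hα h).ne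
      · exact (hN α hα h).ne'
  · rw [hxe] at hpos ⊢
    have hσα : σ α ∈ Δ := himg ▸ Set.mem_image_of_mem σ hα
    rcases lt_or_gt_of_ne (hy1 α hα hne) with h | h
    · linarith [hN' α hα h]
    · exact hN _ hσα (by rwa [hyσ])

lemma weyl_apply_mem (hΔ : IsReducedRootSystem (fun x y : V => ⟪x, y⟫) Δ) {w : V ≃ₗ[ℝ] V}
    (hw : w ∈ WeylGroup (fun x y : V => ⟪x, y⟫) Δ) :
    (∀ α, w α ∈ Δ ↔ α ∈ Δ) ∧ ∀ x y, ⟪w x, w y⟫ = ⟪x, y⟫ := by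
  induction hw using Subgroup.closure_induction with
  | mem w h =>
    obtain ⟨α, hα, hw⟩ := h
    simp only at hw
    have haa : ⟪α, α⟫ ≠ 0 := inner_self_ne_zero.2 fun h => hΔ.2.1 (h ▸ hα)
    have hww : ∀ x, w (w x) = x := fun x => by
      rw [hw (w x), hw x, inner_sub_right, inner_smul_right, sub_sub, ← add_smul]
      convert sub_zero x
      convert zero_smul ℝ α
      field_simp
      ring
    have hmap : ∀ β, β ∈ Δ → w β ∈ Δ := fun β hβ => by
      rw [hw]
      exact (hΔ.2.2.2.1 α hα β hβ).1
    refine ⟨fun β => ⟨fun h => hww β ▸ hmap _ h, hmap β⟩, fun x y => ?_⟩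
    rw [hw, hw]
    simp only [inner_sub_left, inner_sub_right, real_inner_smul_left, real_inner_smul_right]
    rw [real_inner_comm x α]
    field_simp
    ring
  | one => simp
  | mul w v _ _ h1 h2 => simp [h1, h2]
  | inv w _ h =>
    refine ⟨fun α => ?_, fun x y => ?_⟩
    · rw [← h.1]
      simp
    · rw [← h.2]
      simp

/-- Since the roots span, an element of the Weyl group is determined by the permutation of the
finite set `Δ` that it induces. -/
lemma weyl_finite (hΔ : IsReducedRootSystem (fun x y : V => ⟪x, y⟫) Δ) :
    Finite (WeylGroup (fun x y : V => ⟪x, y⟫) Δ) := by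
  have : Finite Δ := hΔ.1
  refine Finite.of_injective
    (fun (w : WeylGroup (fun x y : V => ⟪x, y⟫) Δ) (α : Δ) =>
      (⟨w.1 α.1, ((weyl_apply_mem hΔ w.2).1 _).2 α.2⟩ : Δ)) fun w v h => ?_
  apply Subtype.ext
  apply LinearEquiv.toLinearMap_injective
  refine LinearMap.ext_on hΔ.2.2.1 fun α hα => ?_
  exact congrArg Subtype.val (congrFun h ⟨α, hα⟩)

/-- The reflection in `α`, given by the formula defining the generators of the Weyl group. -/
def rootReflection (α : V) (h : α ≠ 0) : V ≃ₗ[ℝ] V :=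
  Module.reflection (x := α) (f := (2 / ⟪α, α⟫) • innerₗ V α) (by
    have := inner_self_ne_zero (𝕜 := ℝ) |>.2 h
    simp [-inner_self_eq_norm_sq_to_K]
    field_simp)

lemma rootReflection_apply (α : V) (h : α ≠ 0) (x : V) :
    rootReflection α h x = x - (2 * ⟪α, x⟫ / ⟪α, α⟫) • α := by
  simp only [rootReflection, Module.reflection_apply, LinearMap.smul_apply, innerₗ_apply_apply,
    smul_eq_mul]
  congr 2
  ring

/-- The Weyl group acts transitively on the positive halves of `Δ`. -/
lemma exists_weyl_same_sign (hΔ : IsReducedRootSystem (fun x y : V => ⟪x, y⟫) Δ) {x₁ x₂ : V}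
    (h₁ : ∀ α ∈ Δ, ⟪x₁, α⟫ ≠ 0) (h₂ : ∀ α ∈ Δ, ⟪x₂, α⟫ ≠ 0) :
    ∃ w ∈ WeylGroup (fun x y : V => ⟪x, y⟫) Δ,
      ∀ α ∈ Δ, (0 < ⟪x₁, w α⟫ ↔ 0 < ⟪x₂, α⟫) := by
  have := weyl_finite hΔ
  obtain ⟨⟨w, hw⟩, hmax⟩ := Finite.exists_max
    fun w : WeylGroup (fun x y : V => ⟪x, y⟫) Δ => ⟪x₁, w.1 x₂⟫
  refine ⟨w, hw, fun β hβ => ?_⟩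
  obtain ⟨hwΔ, hwi⟩ := weyl_apply_mem hΔ hw
  have hα : w β ∈ Δ := (hwΔ β).2 hβ
  have h0 : w β ≠ 0 := fun h => hΔ.2.1 (h ▸ hα)
  have hs : rootReflection (w β) h0 ∈ WeylGroup (fun x y : V => ⟪x, y⟫) Δ :=
    Subgroup.subset_closure ⟨w β, hα, rootReflection_apply _ _⟩
  have hle := hmax ⟨rootReflection (w β) h0 * w, mul_mem hs hw⟩
  simp only [LinearEquiv.mul_apply, rootReflection_apply, inner_sub_right,
    real_inner_smul_right, hwi] at hle
  have hbb : 0 < ⟪β, β⟫ := real_inner_self_pos.2 fun h => hΔ.2.1 (h ▸ hβ)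
  have hle' : 0 ≤ ⟪x₂, β⟫ * ⟪x₁, w β⟫ := by
    rw [sub_le_self_iff, real_inner_comm, div_mul_eq_mul_div, le_div_iff₀ hbb] at hle
    linarith
  have ha := h₁ _ hα
  have hb := h₂ _ hβ
  constructor
  · intro h
    exact lt_of_le_of_ne (by nlinarith) hb.symm
  · intro h
    exact lt_of_le_of_ne (by nlinarith) ha.symm

end Helpers

/-- Proposition 4.5: every normal double `σ`-system is isomorphic to a
canonical one with the same `(Δ, σ₁)`. -/
theorem exists_canonical_isomorphic_double_sigma
    {V : Type*} [NormedAddCommGroup V] [InnerProductSpace ℝ V] [FiniteDimensional ℝ V]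
    (Δ : Set V) (σ₁ σ₂ : V →ₗ[ℝ] V)
    (hΔ : IsReducedRootSystem (fun x y => ⟪x, y⟫) Δ)
    (hσ₁ : IsSigmaSystem (fun x y => ⟪x, y⟫) Δ σ₁)
    (hσ₂ : IsSigmaSystem (fun x y => ⟪x, y⟫) Δ σ₂)
    (hn₁ : IsNormalSigma Δ σ₁) (hn₂ : IsNormalSigma Δ σ₂) :
    ∃ σ₂' : V →ₗ[ℝ] V,
      IsSigmaSystem (fun x y => ⟪x, y⟫) Δ σ₂' ∧ IsNormalSigma Δ σ₂' ∧
      DoubleSigmaIso (fun x y => ⟪x, y⟫) Δ σ₁ σ₂' Δ σ₁ σ₂ ∧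
      IsCanonicalDoubleSigma Δ σ₁ σ₂' := by
  obtain ⟨x₁, hx₁, hp₁⟩ := exists_sigma_regular hΔ hσ₁
  obtain ⟨x₂, hx₂, hp₂⟩ := exists_sigma_regular hΔ hσ₂
  obtain ⟨w, hw, hsame⟩ := exists_weyl_same_sign hΔ hx₁ hx₂
  obtain ⟨hwΔ, hwi⟩ := weyl_apply_mem hΔ hw
  obtain ⟨hinv, hiso, himg⟩ := hσ₂
  have hmem : ∀ α ∈ Δ, σ₂ α ∈ Δ := fun α hα => himg ▸ Set.mem_image_of_mem σ₂ hα
  have hsym : ∀ α ∈ Δ, w.symm α ∈ Δ := fun α hα => by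
    rw [← hwΔ]
    simpa using hα
  have hsymi : ∀ x y, ⟪w.symm x, w.symm y⟫ = ⟪x, y⟫ := fun x y => by
    rw [← hwi]
    simp
  have hmem' : ∀ α ∈ Δ, w (σ₂ (w.symm α)) ∈ Δ := fun α hα =>
    (hwΔ _).2 (hmem _ (hsym α hα))
  refine ⟨w.toLinearMap ∘ₗ σ₂ ∘ₗ w.symm.toLinearMap, ⟨?_, ?_, ?_⟩, ?_, ?_, ?_⟩
  · intro x
    simp [hinv]
  · intro x y
    have := hiso (w.symm x) (w.symm y)
    simp only at this
    simp [hwi, this, hsymi]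
  · refine Set.Subset.antisymm ?_ fun α hα => ⟨w (σ₂ (w.symm α)), hmem' α hα, by simp [hinv]⟩
    rintro _ ⟨α, hα, rfl⟩
    exact hmem' α hα
  · intro α hα h
    refine hn₂ (w.symm α) (hsym α hα) ?_
    rw [← hwΔ]
    simpa using h
  · refine ⟨LinearEquiv.refl ℝ V, Set.image_id Δ, rfl, w⁻¹, inv_mem hw, ?_⟩
    ext x
    change σ₂ x = w.symm (w (σ₂ (w.symm (w x))))
    simp
  · refine ⟨simpleRoots Δ x₁, ⟨isFundamentalSystem_simpleRoots hΔ hx₁, ?_⟩,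
      ⟨isFundamentalSystem_simpleRoots hΔ hx₁, ?_⟩⟩
    · rw [posRoots_simpleRoots hΔ]
      rintro α ⟨hα, hpos⟩ hne
      exact ⟨hσ₁.2.2 ▸ Set.mem_image_of_mem σ₁ hα, hp₁ α hα hne hpos⟩
    · rw [posRoots_simpleRoots hΔ]
      rintro α ⟨hα, hpos⟩ hne
      refine ⟨hmem' α hα, (hsame _ (hmem _ (hsym α hα))).2 (hp₂ _ (hsym α hα) ?_ ?_)⟩
      · intro h
        apply hne
        simp [h]
      · rw [← hsame _ (hsym α hα)]
        simpa using hpos
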